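/- arXiv:1406.0402 — 4 statements merged into one kernel-verified Lean document; each statement's English description precedes it below -/
import Mathlib

section
/- Let n be an odd positive integer and let a, b be integers with n dividing b. Then (a+b)^n - a^n - b^n is congruent to n·a^{n-1}·b modulo n^3. (Refinement of the expansion (I.5): the leading contribution of the truncated binomial series when n | b is the term n·a^{n-1}·b.) -/
/-!
Modulo `b ^ 3` only the terms `a ^ n`, `n * a ^ (n - 1) * b` and `n.choose 2 * a ^ (n - 2) * b ^ 2`
of the expansion of `(a + b) ^ n` survive. For odd `n` the coefficient `n.choose 2` is a multiple
of `n`, so if `n` divides `b` then the quadratic term is divisible by `n * n ^ 2`.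
-/

theorem dvd_choose_of_coprime {n k : ℕ} (h : n.Coprime k) : n ∣ n.choose k := by
  cases n with
  | zero => simp [(Nat.coprime_zero_left k).mp h]
  | succ n =>
    cases k with
    | zero => simpa using h
    | succ k => exact h.dvd_of_dvd_mul_right ⟨n.choose k, (Nat.add_one_mul_choose_eq n k).symm⟩

section CommRing

variable {R : Type*} [CommRing R]

theorem pow_dvd_add_pow_sub_sum_range (a b : R) (n m : ℕ) :
    b ^ m ∣ (a + b) ^ n - ∑ k ∈ Finset.range m, a ^ (n - k) * b ^ k * n.choose k := by
  have padded_expansion :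
      (a + b) ^ n = ∑ k ∈ Finset.range (m + (n + 1)), a ^ (n - k) * b ^ k * n.choose k := by
    rw [Finset.eventually_constant_sum _ (Nat.le_add_left (n + 1) m), add_comm, add_pow]
    · simp only [mul_comm (b ^ _)]
    · intro k hk
      rw [Nat.choose_eq_zero_of_lt hk, Nat.cast_zero, mul_zero]
  rw [padded_expansion, Finset.sum_range_add, add_sub_cancel_left]
  refine Finset.dvd_sum fun k _ => ?_
  exact ((pow_dvd_pow b (Nat.le_add_right m k)).mul_left _).mul_right _

theorem cube_dvd_add_pow_sub_of_dvd_choose_two {a b d : R} {n : ℕ} (hb : d ∣ b)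
    (hd : d ∣ (n.choose 2 : R)) : d ^ 3 ∣ (a + b) ^ n - a ^ n - n * a ^ (n - 1) * b := by
  have tail : d ^ 3 ∣ (a + b) ^ n -
      (a ^ n + a ^ (n - 1) * b * n + a ^ (n - 2) * b ^ 2 * n.choose 2) := by
    simpa [Finset.sum_range_succ] using
      (pow_dvd_pow_of_dvd hb 3).trans (pow_dvd_add_pow_sub_sum_range a b n 3)
  have quadratic : d ^ 3 ∣ a ^ (n - 2) * b ^ 2 * n.choose 2 :=
    pow_succ d 2 ▸ mul_dvd_mul ((pow_dvd_pow_of_dvd hb 2).mul_left _) hd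
  convert dvd_add tail quadratic using 1
  ring

theorem natCast_cube_dvd_pow_of_odd {b : R} {n : ℕ} (hodd : Odd n) (hb : (n : R) ∣ b) :
    (n : R) ^ 3 ∣ b ^ n := by
  obtain rfl | h3 : n = 1 ∨ 3 ≤ n := by grind
  · simp
  · exact (pow_dvd_pow_of_dvd hb 3).trans (pow_dvd_pow b h3)

theorem stmt_1_general {n : ℕ} (hodd : Odd n) (a b : R) (hb : (n : R) ∣ b) :
    (n : R) ^ 3 ∣ (a + b) ^ n - a ^ n - b ^ n - n * a ^ (n - 1) * b := by
  have hchoose : (n : R) ∣ (n.choose 2 : R) :=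
    Nat.cast_dvd_cast (dvd_choose_of_coprime hodd.coprime_two_right)
  rw [sub_right_comm _ (b ^ n)]
  exact dvd_sub (cube_dvd_add_pow_sub_of_dvd_choose_two hb hchoose)
    (natCast_cube_dvd_pow_of_odd hodd hb)

end CommRing

theorem stmt_1 (n : ℕ) (hn : 0 < n) (hodd : Odd n) (a b : ℤ) (hb : (n : ℤ) ∣ b) :
    (a + b)^n - a^n - b^n ≡ (n : ℤ) * a^(n - 1) * b [ZMOD (n : ℤ)^3] :=
  (Int.modEq_iff_dvd.mpr (stmt_1_general hodd a b hb)).symm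
end

section
/- Let n be an odd positive integer and let a, b be integers such that n divides a + b. Then n^2 divides U(a,b) = (a+b)^n - a^n - b^n. (Result (I.8b), case 2 of Section I for odd n.) -/
/-!
For odd `n`, `a ^ n + b ^ n = (a + b) * ∑ i < n, a ^ i * (-b) ^ (n - 1 - i)`. Modulo a divisor of
`a + b` we have `a ≡ -b`, so the cofactor is congruent to `n * (-b) ^ (n - 1)`: a common divisor of
`n` and `a + b` also divides the cofactor.
-/

section CommRing

variable {R : Type*} [CommRing R] {a b d : R} {n : ℕ}

theorem sub_mul_dvd_pow_sub_pow (hab : d ∣ a - b) (hn : d ∣ (n : R)) :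
    (a - b) * d ∣ a ^ n - b ^ n := by
  have hcofactor : d ∣ ∑ i ∈ Finset.range n, a ^ i * b ^ (n - 1 - i) :=
    (dvd_geom_sum₂_iff_of_dvd_sub hab).mpr (hn.mul_right _)
  rw [← (Commute.all a b).mul_geom_sum₂]
  exact mul_dvd_mul_left _ hcofactor

theorem add_mul_dvd_pow_add_pow_of_odd (hodd : Odd n) (hab : d ∣ a + b) (hn : d ∣ (n : R)) :
    (a + b) * d ∣ a ^ n + b ^ n := by
  rw [← sub_neg_eq_add a b] at hab
  simpa only [hodd.neg_pow, sub_neg_eq_add] using sub_mul_dvd_pow_sub_pow hab hn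

theorem stmt_2_general (hodd : Odd n) (hab : d ∣ a + b) (hn : d ∣ (n : R)) :
    (a + b) * d ∣ (a + b) ^ n - a ^ n - b ^ n := by
  obtain rfl | hn_one := eq_or_ne n 1
  · simp
  have htwo_le : 2 ≤ n := by have := hodd.pos; omega
  have hpow : (a + b) * d ∣ (a + b) ^ n :=
    calc (a + b) * d ∣ (a + b) * (a + b) := mul_dvd_mul_left _ hab
      _ = (a + b) ^ 2 := (sq _).symm
      _ ∣ (a + b) ^ n := pow_dvd_pow _ htwo_le
  rw [sub_sub]
  exact dvd_sub hpow (add_mul_dvd_pow_add_pow_of_odd hodd hab hn)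

end CommRing

theorem stmt_2 (n : ℕ) (hn : 0 < n) (hodd : Odd n) (a b : ℤ) (hab : (n : ℤ) ∣ a + b) :
    (n : ℤ)^2 ∣ (a + b)^n - a^n - b^n := by
  rw [sq]
  exact (mul_dvd_mul_right hab _).trans (stmt_2_general hodd hab dvd_rfl)
end

section
/- Let n be an odd positive integer and let a, b, c be integers such that n divides a + b and n divides c. Then n^2 divides U(a,b,c) = (a+b+c)^n - a^n - b^n - c^n. (Result (II.4a), case 2 of Section II for odd n.) -/
/-!
For odd `n`, `U(a,b,c) = ((a + b + c) ^ n - c ^ n) - (a ^ n - (-b) ^ n)` combines two differences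
of `n`-th powers whose bases differ by `a + b`. When `n ∣ x - y`, the cofactor of `x - y` in
`x ^ n - y ^ n` is congruent to `n * y ^ (n - 1)`, hence to `0`, modulo `n`.
-/

section CommRing

variable {R : Type*} [CommRing R] {n : ℕ}

theorem sub_mul_natCast_dvd_pow_sub_pow {x y : R} (h : (n : R) ∣ x - y) :
    (x - y) * n ∣ x ^ n - y ^ n := by
  rw [← (Commute.all x y).mul_geom_sum₂]
  exact mul_dvd_mul_left _ (dvd_geom_sum₂_self h)

theorem add_mul_natCast_dvd_pow_add_pow (hn : Odd n) {x y : R} (h : (n : R) ∣ x + y) :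
    (x + y) * n ∣ x ^ n + y ^ n := by
  rw [← sub_neg_eq_add] at h
  simpa only [hn.neg_pow, sub_neg_eq_add] using sub_mul_natCast_dvd_pow_sub_pow h

theorem stmt_11_general (hn : Odd n) {a b : R} (c : R) (hab : (n : R) ∣ a + b) :
    (a + b) * n ∣ (a + b + c) ^ n - a ^ n - b ^ n - c ^ n := by
  have hsub : (a + b) * n ∣ (a + b + c) ^ n - c ^ n := by
    rw [← add_sub_cancel_right (a + b) c] at hab
    simpa only [add_sub_cancel_right] using sub_mul_natCast_dvd_pow_sub_pow hab
  have hadd : (a + b) * n ∣ a ^ n + b ^ n := add_mul_natCast_dvd_pow_add_pow hn hab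
  convert dvd_sub hsub hadd using 1
  ring

end CommRing

theorem stmt_11 (n : ℕ) (hn : 0 < n) (hodd : Odd n) (a b c : ℤ)
    (hab : (n : ℤ) ∣ a + b) (hc : (n : ℤ) ∣ c) :
    (n : ℤ)^2 ∣ (a + b + c)^n - a^n - b^n - c^n := by
  rw [sq]
  exact (mul_dvd_mul_right hab _).trans (stmt_11_general hodd c hab)
end

section
/- Let n be an even positive integer and let a, b, c be integers such that n divides a + b and n divides c. Then (a+b+c)^n - a^n - b^n - c^n is congruent to -2·a^n modulo n^2. (Precise form of result (II.4b), case 2 of Section II for even n: the divisibility of the truncated trinomial series by n is governed by that of 2a^n.) -/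
section

variable {R : Type*} [CommRing R] {n : ℕ}

theorem natCast_sq_dvd_pow_sub_pow {x y : R} (h : (n : R) ∣ x - y) :
    (n : R) ^ 2 ∣ x ^ n - y ^ n := by
  simpa only [pow_one, one_add_one_eq_two] using dvd_sub_pow_of_dvd_sub h 1

theorem natCast_sq_dvd_pow_sub_pow_of_even (hn : Even n) {x y : R} (h : (n : R) ∣ x + y) :
    (n : R) ^ 2 ∣ x ^ n - y ^ n := by
  rw [← hn.neg_pow y]
  exact natCast_sq_dvd_pow_sub_pow (by rwa [sub_neg_eq_add])

end

theorem stmt_12_general {R : Type*} [CommRing R] {n : ℕ} (hn : Even n) {a b : R} (c : R)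
    (hab : (n : R) ∣ a + b) :
    (n : R) ^ 2 ∣ (a + b + c) ^ n - a ^ n - b ^ n - c ^ n - -2 * a ^ n := by
  have sq_dvd_add_pow_sub : (n : R) ^ 2 ∣ (a + b + c) ^ n - c ^ n :=
    natCast_sq_dvd_pow_sub_pow (by rwa [add_sub_cancel_right])
  have sq_dvd_pow_sub_pow : (n : R) ^ 2 ∣ a ^ n - b ^ n := natCast_sq_dvd_pow_sub_pow_of_even hn hab
  convert dvd_add sq_dvd_add_pow_sub sq_dvd_pow_sub_pow using 1
  ring

theorem stmt_12 (n : ℕ) (hn : 0 < n) (heven : Even n) (a b c : ℤ)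
    (hab : (n : ℤ) ∣ a + b) (hc : (n : ℤ) ∣ c) :
    (a + b + c)^n - a^n - b^n - c^n ≡ -2 * a^n [ZMOD (n : ℤ)^2] :=
  (Int.modEq_iff_dvd.mpr (stmt_12_general heven c hab)).symm
end
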